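/- On the region where y ≥ (a/(2t))(x - ct)² + b(x - ct) (so the minimizer is s* = 0), the function φ*(x,y,t) = min_{s≥0} [(-x+bs+ct)²/(4(t+as)) + (y+s)²/(4t)] equals ((x - c·t)² + y²)/(4t). -/

import Mathlib

open Set

/-- On the region `y ≥ (a/(2t))(x − ct)² + b(x − ct)`, the minimum over s ≥ 0 of
`(-x + bs + ct)²/(4(t+as)) + (y+s)²/(4t)` is attained (at s = 0) and equals
`((x − ct)² + y²)/(4t)`. -/
theorem stmt_5 (a b c t x y : ℝ) (ha : 0 < a) (hb : 0 < b) (hc : 0 < c) (ht : 0 < t)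
    (hy : 0 ≤ y) (hreg : y ≥ a / (2 * t) * (x - c * t) ^ 2 + b * (x - c * t)) :
    IsLeast ((fun s : ℝ =>
        (-x + b * s + c * t) ^ 2 / (4 * (t + a * s)) + (y + s) ^ 2 / (4 * t)) '' Ici 0)
      (((x - c * t) ^ 2 + y ^ 2) / (4 * t)) := by
  constructor
  · refine ⟨0, by simp, ?_⟩
    simp only [mul_zero, add_zero]
    rw [← add_div, add_div, add_div]
    ring
  · rintro _ ⟨s, hs, rfl⟩
    have hs0 : 0 ≤ s := hs
    obtain ⟨k, hk⟩ : ∃ k : ℝ, x - c * t = k * t := ⟨(x - c * t) / t, by field_simp⟩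
    have hx : x = k * t + c * t := by linarith
    have hq : 0 < t + a * s := by positivity
    have hreg' : a * k ^ 2 * t / 2 + b * (k * t) ≤ y := by
      have e : a / (2 * t) * (k * t) ^ 2 = a * k ^ 2 * t / 2 := by field_simp
      rw [hk, e] at hreg
      exact hreg
    have h1 : (2 * k * (k * t - b * s) - k ^ 2 * (t + a * s)) / 4
        ≤ (-x + b * s + c * t) ^ 2 / (4 * (t + a * s)) := by
      rw [le_div_iff₀ (by positivity), hx]
      nlinarith [sq_nonneg (k * t - b * s - k * (t + a * s))]
    have h2 : ((k * t) ^ 2 + y ^ 2) / (4 * t)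
        - (2 * k * (k * t - b * s) - k ^ 2 * (t + a * s)) / 4 ≤ (y + s) ^ 2 / (4 * t) := by
      rw [le_div_iff₀ (by positivity), sub_mul, div_mul_cancel₀ _ (by positivity)]
      nlinarith [mul_le_mul_of_nonneg_left hreg' hs0, sq_nonneg s]
    rw [hk]
    show _ ≤ (-x + b * s + c * t) ^ 2 / (4 * (t + a * s)) + (y + s) ^ 2 / (4 * t)
    linarith
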